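/- arXiv:1501.03221 — 3 statements merged into one kernel-verified Lean document; each statement's English description precedes it below -/
import Mathlib

section
/- Let p > K ≥ 1, let S be a p×p real symmetric positive semidefinite matrix, let Φ be a p×K real matrix with ΦᵀΦ = I_K, and let γ ≥ 0. Suppose ΦᵀSΦ = V·diag(d₁,…,d_K)·Vᵀ with V a K×K orthogonal matrix and d₁ ≥ d₂ ≥ … ≥ d_K. Assume d₁ > γ and that the set 𝓛 = { L ∈ {1,…,K} : d_L − γ > (tr(S) − Σ_{k=1}^{L}(d_k − γ))/(p − L) } is nonempty. Set L̂ = max 𝓛, σ̂² = (tr(S) − Σ_{k=1}^{L̂}(d_k − γ))/(p − L̂), λ̂_k = (d_k − σ̂² − γ)₊ for k = 1,…,K, and Λ̂ = V·diag(λ̂₁,…,λ̂_K)·Vᵀ. Then σ̂² ≥ 0, Λ̂ is symmetric positive semidefinite, and (Λ̂, σ̂²) minimizes h(Λ, σ²) = (1/2)‖S − ΦΛΦᵀ − σ²I_p‖²_F + γ·tr(Λ) over all real σ² ≥ 0 and all K×K real symmetric positive semidefinite matrices Λ; that is, h(Λ̂, σ̂²) ≤ h(Λ, σ²) for all such (Λ,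 σ²). -/
open Matrix BigOperators

/-- Squared Frobenius norm of a real matrix. -/
noncomputable def frobSq {m n : Type*} [Fintype m] [Fintype n] (M : Matrix m n ℝ) : ℝ :=
  ∑ i, ∑ j, (M i j) ^ 2

/-!
The objective is convex, so the Karush-Kuhn-Tucker conditions are sufficient for a minimizer: the
residual has trace zero, the gradient in `Λ` is positive semidefinite, and its product with `Λ`
vanishes. For `Λ = V diag((dₖ - σ² - γ)₊) Vᵀ` the gradient is `V diag((σ² + γ - dₖ)₊) Vᵀ`, so the
last two conditions hold for every `σ²`, and only the scalar equation
`∑ (dₖ - γ - σ²)₊ + p σ² = tr S` remains. It says that `σ²` is what is left of `tr S` after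
removing the `L` largest values `dₖ - γ`, averaged over the remaining `p - L` dimensions, where `L`
is the number of these values exceeding `σ²`; the maximality of `L̂` selects this `L`.
-/

section PosSemidef

open scoped ComplexOrder MatrixOrder Matrix.Norms.L2Operator

variable {m n 𝕜 : Type*} [Fintype m] [Fintype n] [RCLike 𝕜]

theorem trace_mul_nonneg_of_posSemidef {A B : Matrix n n 𝕜} (hA : A.PosSemidef)
    (hB : B.PosSemidef) : 0 ≤ (A * B).trace := by
  classical
  obtain ⟨C, rfl⟩ := CStarAlgebra.nonneg_iff_eq_star_mul_self.mp hA.nonneg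
  rw [trace_mul_cycle, trace_mul_comm, ← mul_assoc]
  exact (hB.mul_mul_conjTranspose_same C).trace_nonneg

theorem trace_conjTranspose_mul_mul_le [DecidableEq n] {S : Matrix m m 𝕜} (hS : S.PosSemidef)
    {Φ : Matrix m n 𝕜} (hΦ : Φᴴ * Φ = 1) : (Φᴴ * S * Φ).trace ≤ S.trace := by
  classical
  have hproj : IsStarProjection (Φ * Φᴴ) :=
    ⟨by rw [IsIdempotentElem, Matrix.mul_assoc, ← Matrix.mul_assoc Φᴴ, hΦ, Matrix.one_mul],
      (posSemidef_self_mul_conjTranspose Φ).isHermitian⟩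
  have hcompl : 0 ≤ ((1 - Φ * Φᴴ) * S).trace :=
    trace_mul_nonneg_of_posSemidef hproj.one_sub_nonneg.posSemidef hS
  rwa [Matrix.sub_mul, Matrix.one_mul, trace_sub, sub_nonneg, Matrix.mul_assoc,
    trace_mul_comm] at hcompl

end PosSemidef

section ConjDiagonal

variable {n : Type*} [Fintype n] [DecidableEq n] {V : Matrix n n ℝ}

theorem trace_conj_diagonal (hV : Vᵀ * V = 1) (f : n → ℝ) :
    (V * diagonal f * Vᵀ).trace = ∑ k, f k := by
  rw [trace_mul_cycle, hV, Matrix.one_mul, trace_diagonal]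

theorem conj_diagonal_mul_conj_diagonal (hV : Vᵀ * V = 1) (f g : n → ℝ) :
    V * diagonal f * Vᵀ * (V * diagonal g * Vᵀ) = V * diagonal (fun k => f k * g k) * Vᵀ := by
  calc V * diagonal f * Vᵀ * (V * diagonal g * Vᵀ)
      = V * diagonal f * (Vᵀ * V) * diagonal g * Vᵀ := by simp only [Matrix.mul_assoc]
    _ = V * diagonal (fun k => f k * g k) * Vᵀ := by
      rw [hV, Matrix.mul_one, Matrix.mul_assoc V, diagonal_mul_diagonal]

theorem posSemidef_conj_diagonal_iff (hV : Vᵀ * V = 1) {f : n → ℝ} :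
    (V * diagonal f * Vᵀ).PosSemidef ↔ 0 ≤ f := by
  have hunit : IsUnit V := (isUnit_iff_isUnit_det V).2 (isUnit_det_of_left_inverse hV)
  simpa [Pi.le_def, star_eq_conjTranspose] using
    hunit.posSemidef_star_right_conjugate_iff (x := diagonal f)

end ConjDiagonal

section PenalizedLoss

variable {m n : Type*} [Fintype m] [Fintype n]

theorem frobSq_add_two_mul_trace_le (A B : Matrix m n ℝ) :
    frobSq A + 2 * (A * (B - A)ᵀ).trace ≤ frobSq B := by
  simp only [frobSq, trace, diag_apply, mul_apply, transpose_apply, Matrix.sub_apply,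
    Finset.mul_sum, ← Finset.sum_add_distrib]
  gcongr with i _ j _
  linarith [sq_nonneg (B i j - A i j)]

variable [DecidableEq m]

/-- The residual `S - ΦΛΦᵀ - sI` of the covariance `S` in the model `ΦΛΦᵀ + sI`, where `s` is the
noise variance `σ²` of the paper. -/
def lsResidual (S : Matrix m m ℝ) (Φ : Matrix m n ℝ) (Λ : Matrix n n ℝ) (s : ℝ) : Matrix m m ℝ :=
  S - Φ * Λ * Φᵀ - s • (1 : Matrix m m ℝ)

/-- The objective `h(Λ, s)` of the paper, where `s` stands for `σ²` and the nuclear norm is written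
as the trace of `Λ`. -/
noncomputable def penalizedLoss (S : Matrix m m ℝ) (Φ : Matrix m n ℝ) (γ : ℝ) (Λ : Matrix n n ℝ)
    (s : ℝ) : ℝ :=
  (1 / 2) * frobSq (lsResidual S Φ Λ s) + γ * Λ.trace

/-- The gradient of `penalizedLoss` with respect to `Λ`. -/
def lossGradient [DecidableEq n] (S : Matrix m m ℝ) (Φ : Matrix m n ℝ) (γ : ℝ) (Λ : Matrix n n ℝ)
    (s : ℝ) : Matrix n n ℝ :=
  γ • (1 : Matrix n n ℝ) - Φᵀ * lsResidual S Φ Λ s * Φ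

variable [DecidableEq n] {S : Matrix m m ℝ} {Φ : Matrix m n ℝ} {γ : ℝ}

theorem penalizedLoss_add_gradient_le (L M : Matrix n n ℝ) (s t : ℝ) :
    penalizedLoss S Φ γ L s + (lossGradient S Φ γ L s * (M - L)ᵀ).trace
      - (t - s) * (lsResidual S Φ L s).trace ≤ penalizedLoss S Φ γ M t := by
  set R := lsResidual S Φ L s with hR
  have hconvex := frobSq_add_two_mul_trace_le R (lsResidual S Φ M t)
  have hdiff : lsResidual S Φ M t - R = (s - t) • (1 : Matrix m m ℝ) - Φ * (M - L) * Φᵀ := by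
    simp only [hR, lsResidual, Matrix.mul_sub, Matrix.sub_mul, sub_smul]
    abel
  have hcycle : (R * (Φ * (M - L) * Φᵀ)ᵀ).trace = (Φᵀ * R * Φ * (M - L)ᵀ).trace := by
    rw [transpose_mul, transpose_mul, transpose_transpose, ← Matrix.mul_assoc, ← Matrix.mul_assoc,
      trace_mul_comm]
    simp only [Matrix.mul_assoc]
  have hinner : (R * (lsResidual S Φ M t - R)ᵀ).trace
      = (s - t) * R.trace - (Φᵀ * R * Φ * (M - L)ᵀ).trace := by
    rw [hdiff, transpose_sub, Matrix.mul_sub, trace_sub, hcycle]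
    simp
  have hgrad : (lossGradient S Φ γ L s * (M - L)ᵀ).trace
      = γ * (M.trace - L.trace) - (Φᵀ * R * Φ * (M - L)ᵀ).trace := by
    rw [lossGradient, Matrix.sub_mul, trace_sub, ← hR]
    simp
  rw [penalizedLoss, penalizedLoss, ← hR, hgrad]
  linarith

theorem penalizedLoss_le_of_kkt {L M : Matrix n n ℝ} {s : ℝ} (hL : L.IsSymm)
    (htrace : (lsResidual S Φ L s).trace = 0) (hgrad : (lossGradient S Φ γ L s).PosSemidef)
    (hslack : lossGradient S Φ γ L s * L = 0) (hM : M.PosSemidef) (t : ℝ) :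
    penalizedLoss S Φ γ L s ≤ penalizedLoss S Φ γ M t := by
  have hnonneg := trace_mul_nonneg_of_posSemidef hgrad hM.transpose
  have hle := penalizedLoss_add_gradient_le (S := S) (Φ := Φ) (γ := γ) L M s t
  rw [htrace, transpose_sub, hL.eq, Matrix.mul_sub, hslack] at hle
  simp only [sub_zero, mul_zero] at hle
  linarith

theorem trace_lsResidual (hΦ : Φᵀ * Φ = 1) (Λ : Matrix n n ℝ) (s : ℝ) :
    (lsResidual S Φ Λ s).trace = S.trace - Λ.trace - Fintype.card m * s := by
  rw [lsResidual, trace_sub, trace_sub, trace_mul_cycle, hΦ, Matrix.one_mul, trace_smul, trace_one,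
    smul_eq_mul, mul_comm s]

theorem lossGradient_eq (hΦ : Φᵀ * Φ = 1) (Λ : Matrix n n ℝ) (s : ℝ) :
    lossGradient S Φ γ Λ s = (s + γ) • (1 : Matrix n n ℝ) - Φᵀ * S * Φ + Λ := by
  have hcompress : Φᵀ * (Φ * Λ * Φᵀ) * Φ = Λ := by
    calc Φᵀ * (Φ * Λ * Φᵀ) * Φ = Φᵀ * Φ * Λ * (Φᵀ * Φ) := by simp only [Matrix.mul_assoc]
      _ = Λ := by rw [hΦ, Matrix.one_mul, Matrix.mul_one]
  simp only [lossGradient, lsResidual, Matrix.mul_sub, Matrix.sub_mul, hcompress, Matrix.mul_smul,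
    Matrix.smul_mul, Matrix.mul_one, hΦ, add_smul]
  abel

variable {V : Matrix n n ℝ} {d : n → ℝ}

theorem lossGradient_conj_diagonal (hΦ : Φᵀ * Φ = 1) (hV : Vᵀ * V = 1)
    (hS : Φᵀ * S * Φ = V * diagonal d * Vᵀ) (s : ℝ) :
    lossGradient S Φ γ (V * diagonal (fun k => max (d k - s - γ) 0) * Vᵀ) s
      = V * diagonal (fun k => max (s + γ - d k) 0) * Vᵀ := by
  have hposPart (k : n) : max (s + γ - d k) 0 = s + γ - d k + max (d k - s - γ) 0 := by
    grind
  have hdiag : diagonal (fun k => max (s + γ - d k) 0)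
      = (s + γ) • (1 : Matrix n n ℝ) - diagonal d + diagonal (fun k => max (d k - s - γ) 0) := by
    simp only [hposPart, smul_one_eq_diagonal, diagonal_sub, diagonal_add]
  rw [lossGradient_eq hΦ, hS, hdiag]
  simp only [Matrix.mul_add, Matrix.mul_sub, Matrix.add_mul, Matrix.sub_mul, Matrix.mul_smul,
    Matrix.smul_mul, Matrix.mul_one, mul_eq_one_comm.1 hV]

theorem penalizedLoss_conj_diagonal_le (hΦ : Φᵀ * Φ = 1) (hV : Vᵀ * V = 1)
    (hS : Φᵀ * S * Φ = V * diagonal d * Vᵀ) {s : ℝ}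
    (hs : ∑ k, max (d k - s - γ) 0 + Fintype.card m * s = S.trace)
    {M : Matrix n n ℝ} (hM : M.PosSemidef) (t : ℝ) :
    penalizedLoss S Φ γ (V * diagonal (fun k => max (d k - s - γ) 0) * Vᵀ) s
      ≤ penalizedLoss S Φ γ M t := by
  refine penalizedLoss_le_of_kkt ?_ ?_ ?_ ?_ hM t
  · simp [IsSymm, Matrix.mul_assoc]
  · rw [trace_lsResidual hΦ, trace_conj_diagonal hV]
    linarith
  · rw [lossGradient_conj_diagonal hΦ hV hS, posSemidef_conj_diagonal_iff hV]
    exact fun k => le_max_right _ _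
  · have hslack (k : n) : max (s + γ - d k) 0 * max (d k - s - γ) 0 = 0 := by
      rcases le_total (d k) (s + γ) with hk | hk
      · rw [max_eq_right (by linarith : d k - s - γ ≤ 0), mul_zero]
      · rw [max_eq_right (by linarith : s + γ - d k ≤ 0), zero_mul]
    rw [lossGradient_conj_diagonal hΦ hV hS, conj_diagonal_mul_conj_diagonal hV]
    simp [hslack]

end PenalizedLoss

section TailMean

theorem nonneg_of_sum_max_add_mul_eq {n : Type*} [Fintype n] {d : n → ℝ} {γ s P τ : ℝ}
    (hd : 0 ≤ d) (hγ : 0 ≤ γ) (hP : Fintype.card n < P) (hτ : ∑ k, d k ≤ τ)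
    (hs : ∑ k, max (d k - s - γ) 0 + P * s = τ) : 0 ≤ s := by
  by_contra! hneg
  have hsum : ∑ k, max (d k - s - γ) 0 ≤ ∑ k, (d k - s) :=
    Finset.sum_le_sum fun k _ => max_le (by linarith) (sub_nonneg.2 (hneg.le.trans (hd k)))
  rw [Finset.sum_sub_distrib, Finset.sum_const, Finset.card_univ, nsmul_eq_mul] at hsum
  have hgap : (P - Fintype.card n) * s < 0 := mul_neg_of_pos_of_neg (sub_pos.2 hP) hneg
  linarith

variable {K : ℕ} {a : Fin K → ℝ} {P τ : ℝ}

/-- The mean of the remaining `P - L` numbers in a list of `P` numbers with sum `τ`, once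
`a 0, …, a ℓ` have been removed; here `L = ℓ + 1` since the paper counts from `1`. -/
noncomputable def tailMean (P τ : ℝ) (a : Fin K → ℝ) (ℓ : Fin K) : ℝ :=
  (τ - ∑ k ∈ Finset.Iic ℓ, a k) / (P - ((ℓ : ℕ) + 1))

theorem fin_val_add_one_lt (hP : K < P) (ℓ : Fin K) : ((ℓ : ℕ) : ℝ) + 1 < P :=
  lt_of_le_of_lt (by exact_mod_cast ℓ.isLt) hP

theorem le_tailMean_iff_of_covBy (hP : K < P) {ℓ ℓ' : Fin K} (h : ℓ ⋖ ℓ') :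
    a ℓ' ≤ tailMean P τ a ℓ' ↔ a ℓ' ≤ tailMean P τ a ℓ := by
  have hval : ((ℓ' : ℕ) : ℝ) = (ℓ : ℕ) + 1 :=
    mod_cast (Nat.covBy_iff_add_one_eq.1 h.coe_fin).symm
  have hsum : ∑ k ∈ Finset.Iic ℓ', a k = a ℓ' + ∑ k ∈ Finset.Iic ℓ, a k := by
    have : Finset.Iio ℓ' = Finset.Iic ℓ := Finset.coe_injective (by simpa using h.Iio_eq)
    rw [← Finset.Iio_insert, Finset.sum_insert (by simp), this]
  have hpos := fin_val_add_one_lt hP ℓ'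
  rw [tailMean, tailMean, le_div_iff₀ (by linarith), le_div_iff₀ (by linarith), hsum, hval]
  constructor <;> intro h <;> linarith

theorem le_tailMean_of_isGreatest (hP : K < P) (ha : Antitone a) {L : Fin K}
    (hL : IsGreatest {ℓ | tailMean P τ a ℓ < a ℓ} L) {k : Fin K} (hk : L < k) :
    a k ≤ tailMean P τ a L := by
  obtain ⟨ℓ, hcov, hle⟩ := exists_covBy_le_of_lt hk
  have hℓ : a ℓ ≤ tailMean P τ a ℓ := not_lt.1 fun h => (hL.2 h).not_gt hcov.lt
  exact (ha hle).trans ((le_tailMean_iff_of_covBy hP hcov).1 hℓ)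

theorem sum_max_sub_tailMean_add_mul (hP : K < P) (ha : Antitone a) {L : Fin K}
    (hL : IsGreatest {ℓ | tailMean P τ a ℓ < a ℓ} L) :
    ∑ k, max (a k - tailMean P τ a L) 0 + P * tailMean P τ a L = τ := by
  set s := tailMean P τ a L
  have hhead : ∀ k ∈ Finset.Iic L, max (a k - s) 0 = a k - s := fun k hk =>
    max_eq_left (sub_nonneg.2 (hL.1.le.trans (ha (Finset.mem_Iic.1 hk))))
  have htail : ∀ k ∉ Finset.Iic L, max (a k - s) 0 = 0 := fun k hk =>
    max_eq_right (sub_nonpos.2 (le_tailMean_of_isGreatest hP ha hL (by simpa using hk)))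
  have hmean : s * (P - ((L : ℕ) + 1)) = τ - ∑ k ∈ Finset.Iic L, a k :=
    div_mul_cancel₀ _ (sub_pos.2 (fin_val_add_one_lt hP L)).ne'
  rw [← Finset.sum_subset (Finset.subset_univ (Finset.Iic L)) fun k _ => htail k,
    Finset.sum_congr rfl hhead, Finset.sum_sub_distrib, Finset.sum_const, Fin.card_Iic,
    nsmul_eq_mul]
  push_cast
  linarith

end TailMean

theorem stmt_1_general {m : Type*} [Fintype m] [DecidableEq m] {K : ℕ} (hK : K < Fintype.card m)
    {S : Matrix m m ℝ} {Φ : Matrix m (Fin K) ℝ} (hΦ : Φᵀ * Φ = 1) {γ : ℝ}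
    {d : Fin K → ℝ} (hd : Antitone d) {V : Matrix (Fin K) (Fin K) ℝ} (hV : Vᵀ * V = 1)
    (hdecomp : Φᵀ * S * Φ = V * diagonal d * Vᵀ) {c : Fin K → ℝ}
    (hc : c = tailMean (Fintype.card m) S.trace (fun k => d k - γ))
    {L : Fin K} (hL : IsGreatest {ℓ | c ℓ < d ℓ - γ} L) {Λhat : Matrix (Fin K) (Fin K) ℝ}
    (hΛhat : Λhat = V * diagonal (fun k => max (d k - c L - γ) 0) * Vᵀ) :
    (S.PosSemidef → 0 ≤ γ → 0 ≤ c L) ∧ Λhat.PosSemidef ∧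
      ∀ (s : ℝ) (Λ : Matrix (Fin K) (Fin K) ℝ), Λ.PosSemidef →
        penalizedLoss S Φ γ Λhat (c L) ≤ penalizedLoss S Φ γ Λ s := by
  have hP : (K : ℝ) < Fintype.card m := by exact_mod_cast hK
  have hscalar : ∑ k, max (d k - c L - γ) 0 + Fintype.card m * c L = S.trace := by
    subst hc
    simpa only [sub_right_comm] using
      sum_max_sub_tailMean_add_mul hP (fun i j hij => sub_le_sub_right (hd hij) γ) hL
  subst hΛhat
  refine ⟨fun hS hγ => ?_, (posSemidef_conj_diagonal_iff hV).2 fun k => le_max_right _ _,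
    fun s Λ hΛ => penalizedLoss_conj_diagonal_le hΦ hV hdecomp hscalar hΛ s⟩
  have hd0 : 0 ≤ d := by
    rw [← posSemidef_conj_diagonal_iff hV, ← hdecomp]
    simpa using hS.conjTranspose_mul_mul_same Φ
  have htrace : ∑ k, d k ≤ S.trace := by
    rw [← trace_conj_diagonal hV, ← hdecomp]
    simpa using trace_conjTranspose_mul_mul_le hS (by simpa using hΦ)
  exact nonneg_of_sum_max_add_mul_eq hd0 hγ (by simpa using hP) htrace hscalar

/-- Proposition 1 of the paper, case `d₁ > γ`.  Indices `L ∈ {1,…,K}` are represented by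
`ℓ : Fin K` via `L = ℓ.val + 1`, so that `d_L = d ℓ` and `Σ_{k=1}^{L} (d_k − γ)`
is the sum over `k ∈ Finset.Iic ℓ`.  With `L̂ = max 𝓛`, `σ̂² = c(L̂)` and
`Λ̂ = V diag((dₖ − σ̂² − γ)₊) Vᵀ`, we have `σ̂² ≥ 0`, `Λ̂` is symmetric PSD, and
`(Λ̂, σ̂²)` minimizes `h(Λ, σ²) = (1/2)‖S − ΦΛΦᵀ − σ²I‖²_F + γ tr(Λ)`
over `σ² ≥ 0` and symmetric PSD `Λ`. -/
theorem stmt_1 (p K : ℕ) (hK : 1 ≤ K) (hpK : K < p)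
    (S : Matrix (Fin p) (Fin p) ℝ) (hS : S.PosSemidef)
    (Φ : Matrix (Fin p) (Fin K) ℝ) (hΦ : Φᵀ * Φ = 1)
    (γ : ℝ) (hγ : 0 ≤ γ)
    (d : Fin K → ℝ) (hd : Antitone d)
    (V : Matrix (Fin K) (Fin K) ℝ) (hV : Vᵀ * V = 1)
    (hdecomp : Φᵀ * S * Φ = V * Matrix.diagonal d * Vᵀ)
    (hd1 : γ < d ⟨0, hK⟩)
    (c : Fin K → ℝ)
    (hc : ∀ ℓ : Fin K,
      c ℓ = (S.trace - ∑ k ∈ Finset.Iic ℓ, (d k - γ)) / ((p : ℝ) - ((ℓ : ℕ) + 1)))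
    (Lset : Finset (Fin K))
    (hLset : Lset = Finset.univ.filter (fun ℓ : Fin K => c ℓ < d ℓ - γ))
    (hne : Lset.Nonempty)
    (Lhat : Fin K) (hLhat : Lhat = Lset.max' hne)
    (σ2hat : ℝ) (hσ2hat : σ2hat = c Lhat)
    (Λhat : Matrix (Fin K) (Fin K) ℝ)
    (hΛhat : Λhat = V * Matrix.diagonal (fun k => max (d k - σ2hat - γ) 0) * Vᵀ) :
    0 ≤ σ2hat ∧ Λhat.PosSemidef ∧
      ∀ σ2 : ℝ, 0 ≤ σ2 → ∀ Λ : Matrix (Fin K) (Fin K) ℝ, Λ.PosSemidef →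
        (1 / 2) * frobSq (S - Φ * Λhat * Φᵀ - σ2hat • (1 : Matrix (Fin p) (Fin p) ℝ))
            + γ * Λhat.trace ≤
          (1 / 2) * frobSq (S - Φ * Λ * Φᵀ - σ2 • (1 : Matrix (Fin p) (Fin p) ℝ))
            + γ * Λ.trace := by
  subst hLset hLhat hσ2hat
  obtain ⟨hσ, hΛ, hmin⟩ := stmt_1_general (by simpa using hpK) hΦ hd hV hdecomp
    (funext fun ℓ => by simp [hc, tailMean]) (by simpa using Finset.isGreatest_max' _ hne) hΛhat
  exact ⟨hσ hS hγ, hΛ, fun σ2 _ => hmin σ2⟩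
end

section
/- Let p ≥ K ≥ 1, let S be a p×p real symmetric positive semidefinite matrix, let Φ be a p×K real matrix with ΦᵀΦ = I_K, let γ ≥ 0, and fix σ² ≥ 0. Suppose ΦᵀSΦ = V·diag(d₁,…,d_K)·Vᵀ with V a K×K orthogonal matrix and d₁ ≥ … ≥ d_K. Then Λ̂(σ²) = V·diag((d₁ − σ² − γ)₊, …, (d_K − σ² − γ)₊)·Vᵀ minimizes the map Λ ↦ (1/2)‖S − ΦΛΦᵀ − σ²I_p‖²_F + γ·tr(Λ) over all K×K real symmetric positive semidefinite matrices Λ; that is, for every such Λ, (1/2)‖S − ΦΛ̂(σ²)Φᵀ − σ²I_p‖²_F + γ·tr(Λ̂(σ²)) ≤ (1/2)‖S − ΦΛΦᵀ − σ²I_p‖²_F + γ·tr(Λ). -/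
open Matrix BigOperators

/-!
Since `Φ` has orthonormal columns, completing the square turns
`(1/2)‖A − ΦΛΦᵀ‖²_F + γ tr(Λ)` with `A = S − σ²I` into `(1/2)‖B − Λ‖²_F` plus a constant, where
`B = ΦᵀAΦ − γI = V diag(dₖ − σ² − γ) Vᵀ`. The minimizer is therefore the positive semidefinite
matrix nearest to `B`. Rotating by `V` makes `B` diagonal; the distance is then at least that of the
diagonals, and a positive semidefinite matrix has nonnegative diagonal.
-/

theorem trace_transpose_mul_conj {R m n k l : Type*} [CommSemiring R] [Fintype m] [Fintype n]
    [Fintype k] [Fintype l] (A : Matrix m n R) (U : Matrix m k R) (W : Matrix n l R)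
    (M : Matrix k l R) : (Aᵀ * (U * M * Wᵀ)).trace = ((Uᵀ * A * W)ᵀ * M).trace := by
  rw [← Matrix.mul_assoc, trace_mul_comm]
  simp only [transpose_mul, transpose_transpose, Matrix.mul_assoc]

theorem mul_diagonal_mul_transpose_sub_smul_one {R n : Type*} [CommRing R] [Fintype n]
    [DecidableEq n] {V : Matrix n n R} (hV : Vᵀ * V = 1) (d : n → R) (c : R) :
    V * diagonal d * Vᵀ - c • 1 = V * diagonal (fun i => d i - c) * Vᵀ := by
  have hV' : V * Vᵀ = 1 := mul_eq_one_comm.mp hV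
  rw [← diagonal_sub, ← smul_one_eq_diagonal, Matrix.mul_sub, Matrix.sub_mul, Matrix.mul_smul,
    Matrix.mul_one, Matrix.smul_mul, hV']

theorem sub_max_zero_sq_le {R : Type*} [CommRing R] [LinearOrder R] [IsStrictOrderedRing R]
    (b : R) {x : R} (hx : 0 ≤ x) : (b - max b 0) ^ 2 ≤ (b - x) ^ 2 := by
  rcases le_total b 0 with hb | hb
  · rw [max_eq_right hb]
    nlinarith
  · rw [max_eq_left hb, sub_self, zero_pow two_ne_zero]
    exact sq_nonneg _

section Frobenius

variable {m n k l : Type*} [Fintype m] [Fintype n] [Fintype k] [Fintype l]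

theorem frobSq_eq_trace (M : Matrix m n ℝ) : frobSq M = (Mᵀ * M).trace := by
  simp only [frobSq, trace, diag, mul_apply, transpose_apply, sq]
  exact Finset.sum_comm

theorem frobSq_sub (A B : Matrix m n ℝ) :
    frobSq (A - B) = frobSq A - 2 * (Aᵀ * B).trace + frobSq B := by
  have cross_comm : (Bᵀ * A).trace = (Aᵀ * B).trace := by
    rw [← trace_transpose, transpose_mul, transpose_transpose]
  simp only [frobSq_eq_trace, transpose_sub, Matrix.sub_mul, Matrix.mul_sub, trace_sub, cross_comm]
  ring

theorem frobSq_diagonal [DecidableEq n] (a : n → ℝ) : frobSq (diagonal a) = ∑ i, a i ^ 2 := by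
  simp [frobSq_eq_trace, sq]

theorem sum_diag_sq_le_frobSq (M : Matrix n n ℝ) : ∑ i, M i i ^ 2 ≤ frobSq M :=
  Finset.sum_le_sum fun i _ =>
    Finset.single_le_sum (f := fun j => M i j ^ 2) (fun _ _ => sq_nonneg _) (Finset.mem_univ i)

theorem frobSq_mul_mul_transpose [DecidableEq k] [DecidableEq l] {U : Matrix m k ℝ}
    {W : Matrix n l ℝ} (hU : Uᵀ * U = 1) (hW : Wᵀ * W = 1) (M : Matrix k l ℝ) :
    frobSq (U * M * Wᵀ) = frobSq M := by
  have compress : Uᵀ * (U * M * Wᵀ) * W = M := by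
    calc Uᵀ * (U * M * Wᵀ) * W = (Uᵀ * U) * M * (Wᵀ * W) := by simp only [Matrix.mul_assoc]
      _ = M := by rw [hU, hW, Matrix.one_mul, Matrix.mul_one]
  rw [frobSq_eq_trace, trace_transpose_mul_conj, compress, frobSq_eq_trace]

theorem half_frobSq_sub_add_trace [DecidableEq n] {Φ : Matrix m n ℝ} (hΦ : Φᵀ * Φ = 1)
    (A : Matrix m m ℝ) (γ : ℝ) (Λ : Matrix n n ℝ) :
    (1 / 2) * frobSq (A - Φ * Λ * Φᵀ) + γ * Λ.trace =
      (1 / 2) * frobSq (Φᵀ * A * Φ - γ • 1 - Λ) +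
        (1 / 2) * (frobSq A - frobSq (Φᵀ * A * Φ - γ • 1)) := by
  have cross : ((Φᵀ * A * Φ - γ • 1)ᵀ * Λ).trace =
      ((Φᵀ * A * Φ)ᵀ * Λ).trace - γ * Λ.trace := by
    rw [transpose_sub, transpose_smul, transpose_one, Matrix.sub_mul, Matrix.smul_mul,
      Matrix.one_mul, trace_sub, trace_smul, smul_eq_mul]
  rw [frobSq_sub A, frobSq_sub _ Λ, trace_transpose_mul_conj, frobSq_mul_mul_transpose hΦ hΦ,
    cross]
  ring

end Frobenius

section NearestPosSemidef

variable {n : Type*} [Fintype n] [DecidableEq n]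

theorem frobSq_diagonal_sub_max_zero_le (b : n → ℝ) {M : Matrix n n ℝ} (hM : ∀ i, 0 ≤ M i i) :
    frobSq (diagonal b - diagonal fun i => max (b i) 0) ≤ frobSq (diagonal b - M) := by
  calc frobSq (diagonal b - diagonal fun i => max (b i) 0)
      = ∑ i, (b i - max (b i) 0) ^ 2 := by rw [diagonal_sub, frobSq_diagonal]
    _ ≤ ∑ i, (b i - M i i) ^ 2 := Finset.sum_le_sum fun i _ => sub_max_zero_sq_le (b i) (hM i)
    _ = ∑ i, (diagonal b - M) i i ^ 2 := by simp only [Matrix.sub_apply, diagonal_apply_eq]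
    _ ≤ frobSq (diagonal b - M) := sum_diag_sq_le_frobSq _

theorem frobSq_sub_max_zero_le_of_posSemidef {V : Matrix n n ℝ} (hV : Vᵀ * V = 1) (b : n → ℝ)
    {Λ : Matrix n n ℝ} (hΛ : Λ.PosSemidef) :
    frobSq (V * diagonal b * Vᵀ - V * diagonal (fun i => max (b i) 0) * Vᵀ) ≤
      frobSq (V * diagonal b * Vᵀ - Λ) := by
  have hV' : V * Vᵀ = 1 := mul_eq_one_comm.mp hV
  have rotate_back : V * (Vᵀ * Λ * V) * Vᵀ = Λ := by
    calc V * (Vᵀ * Λ * V) * Vᵀ = (V * Vᵀ) * Λ * (V * Vᵀ) := by simp only [Matrix.mul_assoc]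
      _ = Λ := by rw [hV', Matrix.one_mul, Matrix.mul_one]
  have frobSq_rotate (M : Matrix n n ℝ) :
      frobSq (V * diagonal b * Vᵀ - V * M * Vᵀ) = frobSq (diagonal b - M) := by
    rw [← Matrix.sub_mul, ← Matrix.mul_sub, frobSq_mul_mul_transpose hV hV]
  have rotated_posSemidef : (Vᵀ * Λ * V).PosSemidef := by
    simpa only [conjTranspose_eq_transpose_of_trivial] using hΛ.conjTranspose_mul_mul_same V
  rw [frobSq_rotate, ← rotate_back, frobSq_rotate]
  exact frobSq_diagonal_sub_max_zero_le b fun _ => rotated_posSemidef.diag_nonneg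

end NearestPosSemidef

theorem stmt_2_general {m n : Type*} [Fintype m] [Fintype n] [DecidableEq m] [DecidableEq n]
    (S : Matrix m m ℝ) {Φ : Matrix m n ℝ} (hΦ : Φᵀ * Φ = 1) (γ σ2 : ℝ) {d : n → ℝ}
    {V : Matrix n n ℝ} (hV : Vᵀ * V = 1) (hdecomp : Φᵀ * S * Φ = V * diagonal d * Vᵀ)
    {Λ : Matrix n n ℝ} (hΛ : Λ.PosSemidef) :
    (1 / 2) * frobSq (S - Φ * (V * diagonal (fun k => max (d k - σ2 - γ) 0) * Vᵀ) * Φᵀ - σ2 • 1)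
        + γ * (V * diagonal (fun k => max (d k - σ2 - γ) 0) * Vᵀ).trace ≤
      (1 / 2) * frobSq (S - Φ * Λ * Φᵀ - σ2 • 1) + γ * Λ.trace := by
  have shifted_compression :
      Φᵀ * (S - σ2 • 1) * Φ - γ • 1 = V * diagonal (fun k => d k - σ2 - γ) * Vᵀ := by
    rw [Matrix.mul_sub, Matrix.sub_mul, hdecomp, Matrix.mul_smul, Matrix.mul_one,
      Matrix.smul_mul, hΦ, mul_diagonal_mul_transpose_sub_smul_one hV,
      mul_diagonal_mul_transpose_sub_smul_one hV]
  rw [sub_right_comm, sub_right_comm S (Φ * Λ * Φᵀ), half_frobSq_sub_add_trace hΦ,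
    half_frobSq_sub_add_trace hΦ, shifted_compression]
  have nearest := frobSq_sub_max_zero_le_of_posSemidef hV (fun k => d k - σ2 - γ) hΛ
  gcongr

/-- For fixed `σ² ≥ 0`, the matrix `Λ̂(σ²) = V diag((dₖ − σ² − γ)₊) Vᵀ` minimizes
`Λ ↦ (1/2)‖S − ΦΛΦᵀ − σ²I‖²_F + γ tr(Λ)` over symmetric PSD `Λ`
(equation (17) in the proof of Proposition 1). -/
theorem stmt_2 (p K : ℕ) (hK : 1 ≤ K) (hpK : K ≤ p)
    (S : Matrix (Fin p) (Fin p) ℝ) (hS : S.PosSemidef)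
    (Φ : Matrix (Fin p) (Fin K) ℝ) (hΦ : Φᵀ * Φ = 1)
    (γ : ℝ) (hγ : 0 ≤ γ)
    (σ2 : ℝ) (hσ2 : 0 ≤ σ2)
    (d : Fin K → ℝ) (hd : Antitone d)
    (V : Matrix (Fin K) (Fin K) ℝ) (hV : Vᵀ * V = 1)
    (hdecomp : Φᵀ * S * Φ = V * Matrix.diagonal d * Vᵀ)
    (Λhat : Matrix (Fin K) (Fin K) ℝ)
    (hΛhat : Λhat = V * Matrix.diagonal (fun k => max (d k - σ2 - γ) 0) * Vᵀ) :
    ∀ Λ : Matrix (Fin K) (Fin K) ℝ, Λ.PosSemidef →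
      (1 / 2) * frobSq (S - Φ * Λhat * Φᵀ - σ2 • (1 : Matrix (Fin p) (Fin p) ℝ))
          + γ * Λhat.trace ≤
        (1 / 2) * frobSq (S - Φ * Λ * Φᵀ - σ2 • (1 : Matrix (Fin p) (Fin p) ℝ))
          + γ * Λ.trace := by
  subst hΛhat
  exact fun Λ hΛ => stmt_2_general S hΦ γ σ2 hV hdecomp hΛ
end

section
/- Let p ≥ K ≥ 1, let S be a p×p real symmetric matrix, let Φ be a p×K real matrix with ΦᵀΦ = I_K, let Λ be any K×K real matrix, and let σ² be any real number. Then (1/2)‖S − ΦΛΦᵀ − σ²I_p‖²_F = (1/2)‖ΦΦᵀSΦΦᵀ − ΦΛΦᵀ − σ²I_p‖²_F + (1/2)‖S − ΦΦᵀSΦΦᵀ‖²_F + σ²·tr(ΦΦᵀSΦΦᵀ − S). -/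
open Matrix BigOperators

/-!
Put `P = ΦΦᵀ`, an orthogonal projection, and `D = S - PSP`. The matrix whose norm appears on the
left is `(PSP - ΦΛΦᵀ - σ²I) + D`. Since `PDP = 0`, the residual `D` is Frobenius-orthogonal to every
matrix of the form `PNP`, in particular to `PSP - ΦΛΦᵀ`. The cross term therefore comes only from
`-σ²I`, and equals `-σ² tr D`.
-/

theorem mul_sub_compression_mul_eq_zero {R : Type*} [NonUnitalRing R] {e : R}
    (he : IsIdempotentElem e) (a : R) : e * (a - e * a * e) * e = 0 := by
  have hcompress : e * (e * a * e) * e = (e * e) * a * (e * e) := by simp only [mul_assoc]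
  rw [mul_sub, sub_mul, hcompress, he.eq, sub_self]

theorem trace_compression_mul_sub_compression_eq_zero {n R : Type*} [Fintype n]
    [NonUnitalCommRing R] {P : Matrix n n R} (hP : IsIdempotentElem P) (N S : Matrix n n R) :
    (P * N * P * (S - P * S * P)).trace = 0 := by
  calc (P * N * P * (S - P * S * P)).trace
      = (N * (P * (S - P * S * P) * P)).trace := by
        rw [Matrix.mul_assoc, Matrix.mul_assoc, trace_mul_comm]
        simp only [Matrix.mul_assoc]
    _ = 0 := by rw [mul_sub_compression_mul_eq_zero hP, Matrix.mul_zero, trace_zero]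

section Frobenius

variable {m n : Type*} [Fintype m] [Fintype n]

theorem frobSq_eq_trace_transpose_mul_self (A : Matrix m n ℝ) : frobSq A = (Aᵀ * A).trace := by
  rw [trace_mul_comm, ← sum_hadamard_eq]
  simp only [frobSq, hadamard_apply, sq]

theorem frobSq_add (A B : Matrix m n ℝ) :
    frobSq (A + B) = frobSq A + frobSq B + 2 * (Aᵀ * B).trace := by
  have hsymm : (Bᵀ * A).trace = (Aᵀ * B).trace := by
    rw [← trace_transpose, transpose_mul, transpose_transpose]
  simp only [frobSq_eq_trace_transpose_mul_self, transpose_add, Matrix.add_mul, Matrix.mul_add,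
    trace_add, hsymm]
  ring

theorem frobSq_sub_sub_smul_one_of_compression_eq [DecidableEq m] {P M : Matrix m m ℝ}
    (hPsymm : P.IsSymm) (hP : IsIdempotentElem P) (hM : P * M * P = M) (S : Matrix m m ℝ) (c : ℝ) :
    frobSq (S - M - c • (1 : Matrix m m ℝ)) =
      frobSq (P * S * P - M - c • (1 : Matrix m m ℝ)) + frobSq (S - P * S * P)
        + 2 * (c * (P * S * P - S).trace) := by
  have hsplit : S - M - c • (1 : Matrix m m ℝ) = (P * S * P - M - c • 1) + (S - P * S * P) := by
    abel
  have hcompress : P * S * P - M = P * (S - M) * P := by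
    rw [Matrix.mul_sub, Matrix.sub_mul, hM]
  have hcompressT : (P * S * P - M)ᵀ = P * (S - M)ᵀ * P := by
    rw [hcompress, transpose_mul, transpose_mul, hPsymm.eq, Matrix.mul_assoc]
  have hcross : ((P * S * P - M - c • 1)ᵀ * (S - P * S * P)).trace
      = c * (P * S * P - S).trace := by
    rw [transpose_sub, hcompressT, Matrix.sub_mul, trace_sub,
      trace_compression_mul_sub_compression_eq_zero hP, transpose_smul, transpose_one,
      smul_mul, Matrix.one_mul, trace_smul, smul_eq_mul, zero_sub, ← mul_neg, ← trace_neg, neg_sub]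
  rw [hsplit, frobSq_add, hcross]

theorem stmt_3_general [DecidableEq m] (S : Matrix m m ℝ) (Φ : Matrix m n ℝ)
    (hΦ : Φ * Φᵀ * Φ = Φ) (Λ : Matrix n n ℝ) (σ2 : ℝ) :
    (1 / 2) * frobSq (S - Φ * Λ * Φᵀ - σ2 • (1 : Matrix m m ℝ)) =
      (1 / 2) * frobSq (Φ * Φᵀ * S * Φ * Φᵀ - Φ * Λ * Φᵀ - σ2 • (1 : Matrix m m ℝ))
        + (1 / 2) * frobSq (S - Φ * Φᵀ * S * Φ * Φᵀ)
        + σ2 * (Φ * Φᵀ * S * Φ * Φᵀ - S).trace := by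
  have hsymm : (Φ * Φᵀ).IsSymm := by
    rw [IsSymm, transpose_mul, transpose_transpose]
  have hidem : IsIdempotentElem (Φ * Φᵀ) := by
    rw [IsIdempotentElem, ← Matrix.mul_assoc, hΦ]
  have hΦt : Φᵀ * (Φ * Φᵀ) = Φᵀ := by
    simpa only [transpose_mul, transpose_transpose] using congrArg transpose hΦ
  have hcompress : Φ * Φᵀ * (Φ * Λ * Φᵀ) * (Φ * Φᵀ) = Φ * Λ * Φᵀ := by
    calc Φ * Φᵀ * (Φ * Λ * Φᵀ) * (Φ * Φᵀ)
        = (Φ * Φᵀ * Φ) * Λ * (Φᵀ * (Φ * Φᵀ)) := by simp only [Matrix.mul_assoc]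
      _ = Φ * Λ * Φᵀ := by rw [hΦ, hΦt]
  have hassoc : Φ * Φᵀ * S * Φ * Φᵀ = Φ * Φᵀ * S * (Φ * Φᵀ) := Matrix.mul_assoc _ Φ Φᵀ
  rw [hassoc, frobSq_sub_sub_smul_one_of_compression_eq hsymm hidem hcompress]
  ring

end Frobenius

/-- Decomposition of the regularized least-squares objective
(equation (18) in the proof of Proposition 1):
`(1/2)‖S − ΦΛΦᵀ − σ²I‖²_F = (1/2)‖ΦΦᵀSΦΦᵀ − ΦΛΦᵀ − σ²I‖²_F
  + (1/2)‖S − ΦΦᵀSΦΦᵀ‖²_F + σ² tr(ΦΦᵀSΦΦᵀ − S)`. -/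
theorem stmt_3 (p K : ℕ) (hK : 1 ≤ K) (hKp : K ≤ p)
    (S : Matrix (Fin p) (Fin p) ℝ) (hS : S.IsSymm)
    (Φ : Matrix (Fin p) (Fin K) ℝ) (hΦ : Φᵀ * Φ = 1)
    (Λ : Matrix (Fin K) (Fin K) ℝ) (σ2 : ℝ) :
    (1 / 2) * frobSq (S - Φ * Λ * Φᵀ - σ2 • (1 : Matrix (Fin p) (Fin p) ℝ)) =
      (1 / 2) * frobSq (Φ * Φᵀ * S * Φ * Φᵀ - Φ * Λ * Φᵀ
          - σ2 • (1 : Matrix (Fin p) (Fin p) ℝ))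
        + (1 / 2) * frobSq (S - Φ * Φᵀ * S * Φ * Φᵀ)
        + σ2 * (Φ * Φᵀ * S * Φ * Φᵀ - S).trace :=
  stmt_3_general S Φ (by rw [Matrix.mul_assoc, hΦ, Matrix.mul_one]) Λ σ2
end
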